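/- Let 0 < σ < 1 and let M : ℝ → ℝ^{n×n} be continuous with M(0) = I. For x ≠ 0 set S(x) := {s > 0 : ‖M(s)x − x‖ > σ‖M(s)x‖}. Let v ≠ 0, suppose S(v) is nonempty and t := inf S(v) > 0, and suppose M(t)v = a·v for some a ∈ ℝ with |a| < 1. Then a = 1/(1+σ); in particular 1/(1+σ) is an eigenvalue of M(t). -/

import Mathlib

open Matrix

/-!
Both sides of the strict triggering inequality are continuous in time, so they agree at the infimum
`t > 0` of the times where it holds: `‖M(t)v - v‖ = σ‖M(t)v‖`. On the line spanned by `v` this reads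
`|a - 1| = σ|a|`, whose only root with `a < 1` is `1 / (1 + σ)` when `σ ≤ 1`.
-/

open Filter Topology

theorem eq_of_isGLB_setOf_lt {α β : Type*} [LinearOrder α] [TopologicalSpace α] [OrderTopology α]
    [DenselyOrdered α] [LinearOrder β] [TopologicalSpace β] [OrderClosedTopology β]
    {f g : α → β} {b t : α} (hne : {s | b < s ∧ f s < g s}.Nonempty)
    (ht : IsGLB {s | b < s ∧ f s < g s} t) (hbt : b < t)
    (hf : ContinuousAt f t) (hg : ContinuousAt g t) : f t = g t := by
  apply le_antisymm
  · have hfreq : ∃ᶠ s in 𝓝 t, f s ≤ g s :=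
      ((ht.frequently_mem hne).filter_mono nhdsWithin_le_nhds).mono fun _ hs ↦ hs.2.le
    exact le_of_tendsto_of_tendsto_of_frequently hf hg hfreq
  · by_contra! hlt
    have : (𝓝[<] t).NeBot := nhdsLT_neBot_of_exists_lt ⟨b, hbt⟩
    have hmem : ∀ᶠ s in 𝓝[<] t, b < s ∧ f s < g s :=
      nhdsWithin_le_nhds ((eventually_gt_nhds hbt).and (hf.eventually_lt hg hlt))
    obtain ⟨s, hs, hst⟩ := (hmem.and eventually_mem_nhdsWithin).exists
    exact (ht.1 hs).not_gt hst

/-- The positive times at which the relative-error triggering condition holds for a trajectory `ξ`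
whose last sampled value is `x`; the inter-event time is the infimum of this set. -/
def triggeringTimes {E : Type*} [SeminormedAddCommGroup E] (σ : ℝ) (ξ : ℝ → E) (x : E) : Set ℝ :=
  {s | 0 < s ∧ σ * ‖ξ s‖ < ‖ξ s - x‖}

theorem bddBelow_triggeringTimes {E : Type*} [SeminormedAddCommGroup E] (σ : ℝ) (ξ : ℝ → E)
    (x : E) : BddBelow (triggeringTimes σ ξ x) :=
  ⟨0, fun _ hs ↦ hs.1.le⟩

theorem mul_norm_eq_norm_sub_of_isGLB_triggeringTimes {E : Type*} [SeminormedAddCommGroup E]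
    {σ t : ℝ} {ξ : ℝ → E} {x : E} (ht : IsGLB (triggeringTimes σ ξ x) t) (htpos : 0 < t)
    (hξ : ContinuousAt ξ t) : σ * ‖ξ t‖ = ‖ξ t - x‖ :=
  eq_of_isGLB_setOf_lt ht.nonempty ht htpos (continuousAt_const.mul hξ.norm)
    (hξ.sub continuousAt_const).norm

theorem norm_smul_sub_self {𝕜 E : Type*} [NormedField 𝕜] [SeminormedAddCommGroup E]
    [NormedSpace 𝕜 E] (a : 𝕜) (v : E) : ‖a • v - v‖ = ‖a - 1‖ * ‖v‖ := by
  rw [← norm_smul, sub_smul, one_smul]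

theorem eq_one_div_one_add_of_mul_abs_eq {K : Type*} [Field K] [LinearOrder K]
    [IsStrictOrderedRing K] {σ a : K} (hσ : σ ≤ 1) (ha : a < 1) (h : σ * |a| = |a - 1|) :
    a = 1 / (1 + σ) := by
  rw [abs_sub_comm, abs_of_pos (sub_pos.mpr ha)] at h
  have ha_nonneg : 0 ≤ a := by
    by_contra! hneg
    have hle : 1 - a ≤ -a := calc
      1 - a = σ * |a| := h.symm
      _ ≤ |a| := mul_le_of_le_one_left (abs_nonneg a) hσ
      _ = -a := abs_of_neg hneg
    linarith
  rw [abs_of_nonneg ha_nonneg] at h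
  exact eq_one_div_of_mul_eq_one_left (by linear_combination h)

theorem continuous_toEuclideanLin_apply {X 𝕜 m n : Type*} [TopologicalSpace X] [RCLike 𝕜]
    [Fintype n] [DecidableEq n] {M : X → Matrix m n 𝕜} (hM : Continuous M)
    (v : EuclideanSpace 𝕜 n) : Continuous fun s ↦ Matrix.toEuclideanLin (M s) v :=
  (PiLp.continuous_toLp 2 _).comp (hM.matrix_mulVec continuous_const)

theorem fixed_oline_tabuada_eigenvalue_general {E : Type*} [NormedAddCommGroup E]
    [NormedSpace ℝ E] {σ : ℝ} (hσ : σ ≤ 1) {L : ℝ → Module.End ℝ E} {v : E} (hv : v ≠ 0)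
    {t : ℝ} (hL : ContinuousAt (fun s ↦ L s v) t)
    (ht : IsGLB (triggeringTimes σ (fun s ↦ L s v) v) t) (htpos : 0 < t)
    {a : ℝ} (ha : L t v = a • v) (ha_lt : a < 1) :
    a = 1 / (1 + σ) ∧ (L t).HasEigenvalue (1 / (1 + σ)) := by
  have hnorm : σ * ‖a • v‖ = ‖a • v - v‖ :=
    ha ▸ mul_norm_eq_norm_sub_of_isGLB_triggeringTimes ht htpos hL
  have habs : σ * |a| = |a - 1| := by
    rw [norm_smul_sub_self, norm_smul, ← mul_assoc] at hnorm
    exact mul_right_cancel₀ (norm_ne_zero_iff.mpr hv) hnorm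
  have haσ : a = 1 / (1 + σ) := eq_one_div_one_add_of_mul_abs_eq hσ ha_lt habs
  exact ⟨haσ, haσ ▸ Module.End.hasEigenvalue_of_hasEigenvector
    ⟨Module.End.mem_eigenspace_iff.mpr ha, hv⟩⟩

/-- for the relative-error triggering condition
`‖M(s)x − x‖ > σ‖M(s)x‖` with `0 < σ < 1`, if `v ≠ 0` spans a fixed o-line with
inter-event time `t = inf S(v) > 0` and `M(t) v = a v` with `|a| < 1`, then
`a = 1/(1+σ)`; in particular `1/(1+σ)` is an eigenvalue of `M(t)`. -/
theorem fixed_oline_tabuada_eigenvalue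
    {n : ℕ} (σ : ℝ) (hσ : 0 < σ) (hσ1 : σ < 1)
    (M : ℝ → Matrix (Fin n) (Fin n) ℝ)
    (hMcont : ∀ i j, Continuous (fun s => M s i j))
    (hM0 : M 0 = 1)
    (S : EuclideanSpace ℝ (Fin n) → Set ℝ)
    (hS : ∀ x, S x = {s : ℝ | 0 < s ∧
      σ * ‖Matrix.toEuclideanLin (M s) x‖ < ‖Matrix.toEuclideanLin (M s) x - x‖})
    (v : EuclideanSpace ℝ (Fin n)) (hv : v ≠ 0)
    (hSne : (S v).Nonempty)
    (t : ℝ) (ht : t = sInf (S v)) (htpos : 0 < t)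
    (a : ℝ) (ha : Matrix.toEuclideanLin (M t) v = a • v) (haGES : |a| < 1) :
    a = 1 / (1 + σ) ∧ Module.End.HasEigenvalue (Matrix.toEuclideanLin (M t)) (1 / (1 + σ)) := by
  have hSv : S v = triggeringTimes σ (fun s ↦ Matrix.toEuclideanLin (M s) v) v := hS v
  have hglb : IsGLB (S v) t := ht ▸ isGLB_csInf hSne (hSv ▸ bddBelow_triggeringTimes σ _ v)
  exact fixed_oline_tabuada_eigenvalue_general hσ1.le hv
    (continuous_toEuclideanLin_apply (continuous_matrix hMcont) v).continuousAt
    (hSv ▸ hglb) htpos ha (abs_lt.mp haGES).2
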